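/- Let σ act on (ℂ^×)⁴ by σ(z, w, u, v) = (conj(w), conj(z), conj(v), conj(u)), and let N = {(z, w, u, v) ∈ (ℂ^×)⁴ : z·w = 1 and u·v = 1}, a σ-stable subgroup. Let Δ = {(t, t, t⁻¹, t⁻¹) : t ∈ ℂ^×}, a σ-stable subgroup of (ℂ^×)⁴, and let P = (ℂ^×)⁴/Δ with the induced automorphism σ̄. Then the composite map H¹(σ, N) → H¹(σ̄, P) induced by the inclusion N ⊆ (ℂ^×)⁴ followed by the projection to P is trivial: for every n ∈ N with n·σ(n) = 1 there exists q ∈ (ℂ^×)⁴ such that n·(q·σ(q)⁻¹)⁻¹ ∈ Δ. -/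

import Mathlib

noncomputable section

/-- Complex conjugation on `ℂˣ`. -/
def conjUnits : ℂˣ →* ℂˣ := Units.map (starRingEnd ℂ)

/-- The Galois action `σ(z, w, u, v) = (conj w, conj z, conj v, conj u)` on `(ℂˣ)⁴`. -/
def sigma4 (x : ℂˣ × ℂˣ × ℂˣ × ℂˣ) : ℂˣ × ℂˣ × ℂˣ × ℂˣ :=
  (conjUnits x.2.1, conjUnits x.1, conjUnits x.2.2.2, conjUnits x.2.2.1)

/-- The subgroup `N = {(z,w,u,v) : zw = 1 and uv = 1}` of `(ℂˣ)⁴`, as a set. -/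
def Nset : Set (ℂˣ × ℂˣ × ℂˣ × ℂˣ) :=
  {x | x.1 * x.2.1 = 1 ∧ x.2.2.1 * x.2.2.2 = 1}

/-- The subgroup `Δ = {(t, t, t⁻¹, t⁻¹) : t ∈ ℂˣ}`, as a set. -/
def deltaSet : Set (ℂˣ × ℂˣ × ℂˣ × ℂˣ) :=
  {x | ∃ t : ℂˣ, x = (t, t, t⁻¹, t⁻¹)}

/-!
The map factors through `H¹(σ, (ℂˣ)⁴)`, which vanishes: `(ℂˣ)⁴` is a product of two copies of
`ℂˣ × ℂˣ`, each with the action that exchanges the two factors, i.e. the module induced from the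
trivial subgroup (Shapiro's lemma).
-/

/-- Triviality of `H¹(σ, A)` for the group of order two acting on `A` through an involution `σ`:
every cocycle `a` is the coboundary of some `b`. That `σ` is an involutive automorphism is not
part of the definition, so that it applies to bare functions such as `sigma4`. -/
def TrivialH1 {A : Type*} [Group A] (σ : A → A) : Prop :=
  ∀ a, a * σ a = 1 → ∃ b, a = b * (σ b)⁻¹

namespace TrivialH1

variable {A B : Type*} [Group A] [Group B] {σ : A → A} {τ : B → B}

theorem of_semiconj (hσ : TrivialH1 σ) (e : A ≃* B) (he : Function.Semiconj e σ τ) :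
    TrivialH1 τ := by
  intro b hb
  have h_cocycle : e.symm b * σ (e.symm b) = 1 :=
    e.injective (by rw [map_mul, he, e.apply_symm_apply, hb, map_one])
  obtain ⟨c, hc⟩ := hσ _ h_cocycle
  refine ⟨e c, ?_⟩
  rw [← he, ← map_inv, ← map_mul, ← hc, e.apply_symm_apply]

theorem prodMap (hσ : TrivialH1 σ) (hτ : TrivialH1 τ) : TrivialH1 (Prod.map σ τ) := by
  rintro ⟨a, b⟩ h
  obtain ⟨ha, hb⟩ := Prod.mk_eq_one.mp h
  obtain ⟨c, hc⟩ := hσ a ha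
  obtain ⟨d, hd⟩ := hτ b hb
  exact ⟨(c, d), Prod.ext hc hd⟩

theorem prodMap_comp_swap (φ : A →* A) : TrivialH1 (Prod.map φ φ ∘ Prod.swap) := by
  rintro ⟨z, w⟩ h
  have hw : w = (φ z)⁻¹ := eq_inv_of_mul_eq_one_left (Prod.mk_eq_one.mp h).2
  exact ⟨(z, 1), by simp [hw]⟩

end TrivialH1

theorem stmt_4_general : TrivialH1 sigma4 :=
  have h_pair := TrivialH1.prodMap_comp_swap conjUnits
  (h_pair.prodMap h_pair).of_semiconj MulEquiv.prodAssoc fun _ ↦ rfl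

/-- The composite map `H¹(σ, N) → H¹(σ̄, P)`, where `P = (ℂˣ)⁴/Δ`, is
trivial: every `σ`-cocycle of `N` becomes a boundary modulo `Δ`. -/
theorem stmt_4 :
    ∀ n : ℂˣ × ℂˣ × ℂˣ × ℂˣ, n ∈ Nset → n * sigma4 n = 1 →
      ∃ q : ℂˣ × ℂˣ × ℂˣ × ℂˣ, n * (q * (sigma4 q)⁻¹)⁻¹ ∈ deltaSet := by
  intro n _ hn
  obtain ⟨q, hq⟩ := stmt_4_general n hn
  exact ⟨q, 1, by rw [← hq, mul_inv_cancel, inv_one]; rfl⟩
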